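/- Let G be a finite simple graph and let X ⊆ V(G) be a cluster vertex deletion set, i.e. a set of vertices such that the subgraph of G induced on V(G) \ X is a disjoint union of complete graphs. Then χ_ssc(G) ≤ |X| + 1. -/

import Mathlib

open SimpleGraph

/-- The closed neighbourhood of `v` in `G`. -/
def closedNbhd {V : Type*} (G : SimpleGraph V) (v : V) : Set V :=
  {u | u = v ∨ G.Adj v u}

/-- `c` is a `q`-subset square colouring of `G`: colours `1, …, q` are real colours and
colour `0` means "uncoloured"; every closed neighbourhood contains a coloured vertex, and
no nonzero colour appears on two distinct vertices of a closed neighbourhood. -/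
def IsSubsetSquareColouring {V : Type*} (G : SimpleGraph V) (q : ℕ) (c : V → ℕ) : Prop :=
  (∀ v, c v ≤ q) ∧
  (∀ v, ∃ u ∈ closedNbhd G v, c u ≠ 0) ∧
  (∀ v i, 1 ≤ i → i ≤ q →
    ∀ u ∈ closedNbhd G v, ∀ w ∈ closedNbhd G v, c u = i → c w = i → u = w)

/-- The subset square chromatic number `χ_ssc G`. -/
noncomputable def sscNum {V : Type*} (G : SimpleGraph V) : ℕ :=
  sInf {q | ∃ c : V → ℕ, IsSubsetSquareColouring G q c}

/-!
A graph has a `q`-subset square colouring as soon as it has `q` packings (sets meeting each closed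
neighbourhood at most once) whose union is dominating. Every vertex of `X` is a packing by itself.
One more packing dominates the rest: a maximal independent set `S` among the vertices not dominated
by `X`. Indeed, a common closed neighbour of two vertices of `S` is not in `X`, so in the cluster
graph on `Xᶜ` these vertices lie in the same clique and independence forces them to be equal.
-/

section Packing

variable {V : Type*} {G : SimpleGraph V}

/-- `D` is a dominating set of `G`: it meets every closed neighbourhood. -/
def IsDominating (G : SimpleGraph V) (D : Set V) : Prop :=
  ∀ v, (closedNbhd G v ∩ D).Nonempty

/-- `S` is a packing (2-packing) of `G`, i.e. its vertices have pairwise disjoint closed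
neighbourhoods; encoded by saying that every closed neighbourhood meets `S` at most once. Colour
classes of subset square colourings are packings. -/
def IsPacking (G : SimpleGraph V) (S : Set V) : Prop :=
  ∀ v, (closedNbhd G v ∩ S).Subsingleton

/-- `X` is a cluster vertex deletion set of `G`; that every component of `G[Xᶜ]` is complete is
encoded as adjacency being transitive on distinct vertices outside `X`. -/
def IsClusterDeletionSet (G : SimpleGraph V) (X : Set V) : Prop :=
  ∀ u v w : V, u ∉ X → v ∉ X → w ∉ X → G.Adj u v → G.Adj v w → u ≠ w → G.Adj u w

/-- The vertices of `G` not dominated by `X`: those that are neither in `X` nor adjacent to it. -/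
def undominated (G : SimpleGraph V) (X : Set V) : Set V :=
  {v | Disjoint (closedNbhd G v) X}

theorem self_mem_closedNbhd (v : V) : v ∈ closedNbhd G v :=
  Or.inl rfl

theorem mem_closedNbhd_comm {u v : V} : u ∈ closedNbhd G v ↔ v ∈ closedNbhd G u :=
  or_congr eq_comm (G.adj_comm v u)

theorem isPacking_singleton (x : V) : IsPacking G {x} :=
  fun _ ↦ Set.subsingleton_singleton.anti Set.inter_subset_right

section PackingColouring

variable {ι : Type*} [Fintype ι] {P : ι → Set V}

open Classical in
/-- The colouring that gives each vertex covered by the family `P` the number, in `1, …, |ι|`, of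
some member of `P` containing it, and leaves all other vertices uncoloured. -/
noncomputable def coverColouring (P : ι → Set V) (v : V) : ℕ :=
  if h : ∃ i, v ∈ P i then Fintype.equivFin ι h.choose + 1 else 0

theorem coverColouring_le_card (v : V) : coverColouring P v ≤ Fintype.card ι := by
  unfold coverColouring
  split_ifs with h
  · exact (Fintype.equivFin ι h.choose).isLt
  · exact Nat.zero_le _

theorem coverColouring_ne_zero_iff {v : V} : coverColouring P v ≠ 0 ↔ v ∈ ⋃ i, P i := by
  simp [coverColouring]

theorem exists_mem_of_coverColouring_eq {u w : V} (hu : coverColouring P u ≠ 0)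
    (huw : coverColouring P u = coverColouring P w) : ∃ i, u ∈ P i ∧ w ∈ P i := by
  have hu' : ∃ i, u ∈ P i := Set.mem_iUnion.mp (coverColouring_ne_zero_iff.mp hu)
  have hw' : ∃ i, w ∈ P i := Set.mem_iUnion.mp (coverColouring_ne_zero_iff.mp (huw ▸ hu))
  have hchoose : hu'.choose = hw'.choose := by
    simpa [coverColouring, hu', hw', Fin.val_inj] using huw
  exact ⟨hu'.choose, hu'.choose_spec, hchoose ▸ hw'.choose_spec⟩

theorem isSubsetSquareColouring_coverColouring (hpack : ∀ i, IsPacking G (P i))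
    (hdom : IsDominating G (⋃ i, P i)) :
    IsSubsetSquareColouring G (Fintype.card ι) (coverColouring P) := by
  refine ⟨coverColouring_le_card, fun v ↦ ?_, fun v k hk _ u hu w hw huk hwk ↦ ?_⟩
  · obtain ⟨u, huv, hu⟩ := hdom v
    exact ⟨u, huv, coverColouring_ne_zero_iff.mpr hu⟩
  · obtain ⟨i, hui, hwi⟩ :=
      exists_mem_of_coverColouring_eq (P := P) (u := u) (w := w) (by omega) (by omega)
    exact hpack i v ⟨hu, hui⟩ ⟨hw, hwi⟩

end PackingColouring

theorem exists_isSubsetSquareColouring_card_add_one {X : Finset V} {S : Set V}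
    (hS : IsPacking G S) (hdom : IsDominating G (S ∪ X)) :
    ∃ c : V → ℕ, IsSubsetSquareColouring G (X.card + 1) c := by
  let P : Option X → Set V := fun o ↦ o.elim S fun x ↦ {x.1}
  have hpack : ∀ o, IsPacking G (P o) := by
    rintro (_ | x)
    exacts [hS, isPacking_singleton x.1]
  have hunion : ⋃ o, P o = S ∪ X := by
    simp [P, Set.iUnion_option]
  have hcard : Fintype.card (Option X) = X.card + 1 := by simp
  exact hcard ▸ ⟨_, isSubsetSquareColouring_coverColouring hpack (hunion ▸ hdom)⟩

theorem exists_maximal_isIndepSet_subset (G : SimpleGraph V) (U : Set V) :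
    ∃ S, Maximal (fun S ↦ S ⊆ U ∧ G.IsIndepSet S) S :=
  zorn_subset {S | S ⊆ U ∧ G.IsIndepSet S} fun C hC hchain ↦
    ⟨⋃₀ C, ⟨Set.sUnion_subset fun _ hS ↦ (hC hS).1,
      hchain.pairwise_sUnion.mpr fun _ hS ↦ (hC hS).2⟩, fun _ ↦ Set.subset_sUnion_of_mem⟩

theorem closedNbhd_inter_nonempty_of_maximal {U S : Set V}
    (hS : Maximal (fun S ↦ S ⊆ U ∧ G.IsIndepSet S) S) {v : V} (hv : v ∈ U) :
    (closedNbhd G v ∩ S).Nonempty := by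
  by_contra hempty
  have hnonadj : ∀ u ∈ S, ¬ G.Adj v u := fun u hu hvu ↦ hempty ⟨u, Or.inr hvu, hu⟩
  have hinsert : G.IsIndepSet (insert v S) :=
    hS.prop.2.insert fun u hu _ ↦ ⟨hnonadj u hu, fun huv ↦ hnonadj u hu huv.symm⟩
  have hvS : v ∈ S :=
    hS.le_of_ge ⟨Set.insert_subset hv hS.prop.1, hinsert⟩ (Set.subset_insert v S)
      (Set.mem_insert v S)
  exact hempty ⟨v, self_mem_closedNbhd v, hvS⟩

theorem isDominating_union_of_undominated {X S : Set V}
    (hS : ∀ v ∈ undominated G X, (closedNbhd G v ∩ S).Nonempty) : IsDominating G (S ∪ X) := by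
  intro v
  rw [Set.inter_union_distrib_left, Set.union_nonempty]
  by_cases hv : v ∈ undominated G X
  · exact Or.inl (hS v hv)
  · exact Or.inr (Set.not_disjoint_iff_nonempty_inter.mp hv)

theorem IsClusterDeletionSet.mem_closedNbhd_trans {X : Set V} (hX : IsClusterDeletionSet G X)
    {u v w : V} (hu : u ∉ X) (hv : v ∉ X) (hw : w ∉ X) (hvu : v ∈ closedNbhd G u)
    (hwv : w ∈ closedNbhd G v) : w ∈ closedNbhd G u := by
  rcases hvu with rfl | huv
  · exact hwv
  rcases hwv with rfl | hvw
  · exact Or.inr huv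
  by_cases huw : u = w
  · exact Or.inl huw.symm
  · exact Or.inr (hX u v w hu hv hw huv hvw huw)

theorem IsClusterDeletionSet.isPacking_of_isIndepSet {X S : Set V}
    (hX : IsClusterDeletionSet G X) (hSX : S ⊆ undominated G X) (hS : G.IsIndepSet S) :
    IsPacking G S := by
  rintro v u ⟨huv, hu⟩ w ⟨hwv, hw⟩
  have notMem_of_closedNbhd {s t : V} (hs : s ∈ S) (ht : t ∈ closedNbhd G s) : t ∉ X :=
    Set.disjoint_left.mp (hSX hs) ht
  have hvu : v ∈ closedNbhd G u := mem_closedNbhd_comm.mp huv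
  have hwu : w ∈ closedNbhd G u :=
    hX.mem_closedNbhd_trans (notMem_of_closedNbhd hu (self_mem_closedNbhd u))
      (notMem_of_closedNbhd hu hvu) (notMem_of_closedNbhd hw (self_mem_closedNbhd w)) hvu hwv
  by_contra hne
  exact hS hu hw hne (hwu.resolve_left (Ne.symm hne))

end Packing

theorem stmt5_general {V : Type*} (G : SimpleGraph V) (X : Finset V)
    (hcluster : IsClusterDeletionSet G X) :
    ∃ c : V → ℕ, IsSubsetSquareColouring G (X.card + 1) c := by
  obtain ⟨S, hS⟩ := exists_maximal_isIndepSet_subset G (undominated G X)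
  have hpack : IsPacking G S := hcluster.isPacking_of_isIndepSet hS.prop.1 hS.prop.2
  have hdom : IsDominating G (S ∪ X) :=
    isDominating_union_of_undominated fun _ ↦ closedNbhd_inter_nonempty_of_maximal hS
  exact exists_isSubsetSquareColouring_card_add_one hpack hdom

theorem stmt5 {V : Type*} [Fintype V] (G : SimpleGraph V) (X : Finset V)
    (hcluster : ∀ u v w : V, u ∉ X → v ∉ X → w ∉ X →
      G.Adj u v → G.Adj v w → u ≠ w → G.Adj u w) :
    sscNum G ≤ X.card + 1 :=
  Nat.sInf_le (stmt5_general G X hcluster)
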